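/- For every rational number q ≥ 1, there exists A ∈ P_{fin,0}(ℕ₀) with nonempty length set such that max(L(A))/min(L(A)) = q; that is, P_{fin,0}(ℕ₀) is fully elastic. -/

import Mathlib

open Pointwise

/-- `X` is an atom (indecomposable element) of the monoid `P_{fin,0}(ℕ)` of finite
subsets of ℕ containing 0 under sumset addition. -/
def IsAtomP (X : Finset ℕ) : Prop :=
  0 ∈ X ∧ X ≠ {0} ∧
    ∀ A B : Finset ℕ, 0 ∈ A → 0 ∈ B → X = A + B → A = {0} ∨ B = {0}

/-- The length set of `X` in `P_{fin,0}(ℕ)`: the set of `n` such that `X` is a sum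
of `n` atoms. -/
def LengthSet (X : Finset ℕ) : Set ℕ :=
  {n | ∃ l : Multiset (Finset ℕ), Multiset.card l = n ∧ (∀ U ∈ l, IsAtomP U) ∧ l.sum = X}

/-- `X` is relatively cancellative in `P_{fin,0}(ℕ)`. -/
def RelCancel (X : Finset ℕ) : Prop :=
  ∀ B C D : Finset ℕ, 0 ∈ B → 0 ∈ C → 0 ∈ D → X = B + C → X = B + D → C = D

/-- `C` and `D` are relatively prime in `P_{fin,0}(ℕ)`: their only common divisor is `{0}`. -/
def RelPrime (C D : Finset ℕ) : Prop :=
  ∀ T : Finset ℕ, 0 ∈ T → (∃ C' : Finset ℕ, 0 ∈ C' ∧ C = T + C') →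
    (∃ D' : Finset ℕ, 0 ∈ D' ∧ D = T + D') → T = {0}

/-!
Call a set rigid if in each of its decompositions `X + Y` the graph of uniquely represented sums is
connected. In a decomposition of a product of two rigid sets, the fibers are then constant, so that
the decomposition is componentwise. As products can be coded inside `ℕ`, the sum of the length sets
of two rigid sets is again the length set of a rigid set, and the pairs `(min L(A), max L(A))` for
rigid `A` form a monoid. It contains `(1, 1)`, so `k • (m, M) + j • (1, 1)` reaches every ratio
`q ≥ 1` as soon as pairs `(2, M)` occur with `M` arbitrarily large.

These come from sums of two atoms `{0} × C₀ ∪ {1} × C₁` and `{0} × D₀ ∪ {3} × D₁`. If `C₁` divides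
`C₀ + D₀` and `C₀ + D₁`, then it divides that sum, whose maximal length is therefore at least any
length of `C₁`. Starting from `{0, 1} + {0, 3, 4, 7} = {0, 1, 4} + {0, 3, 4}` and
`{0, 1} + {0, 4, 5, 8} = {0, 1, 4} + {0, 4, 5}`, powers of these relations provide arbitrarily long
`C₁`.
-/

section Rigid

variable {M : Type*} [AddCommMonoid M] {A X Y Z : Finset M}

/-- Connectedness of the bipartite graph on `X` and `Y` with an edge `x — y` whenever `x + y` is
represented only once in `X + Y`, expressed as induction along edges starting at `0 ∈ X`. -/
def SumConnected (X Y : Finset M) : Prop :=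
  ∀ P Q : M → Prop, (∀ x ∈ X, ∀ y ∈ Y, UniqueAdd X Y x y → (P x ↔ Q y)) → P 0 →
    (∀ x ∈ X, P x) ∧ ∀ y ∈ Y, Q y

theorem uniqueAdd_zero_zero [Subsingleton (AddUnits M)] : UniqueAdd X Y 0 0 :=
  fun _ _ _ _ h => add_eq_zero.1 (h.trans (add_zero 0))

variable [DecidableEq M]

theorem zero_mem_add_iff [Subsingleton (AddUnits M)] : 0 ∈ X + Y ↔ 0 ∈ X ∧ 0 ∈ Y := by
  refine ⟨fun h => ?_, fun h => Finset.mem_add.2 ⟨0, h.1, 0, h.2, add_zero 0⟩⟩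
  obtain ⟨x, hx, y, hy, hxy⟩ := Finset.mem_add.1 h
  obtain ⟨rfl, rfl⟩ := add_eq_zero.1 hxy
  exact ⟨hx, hy⟩

/-- A finite set containing `0` all of whose decompositions as a sumset have a connected graph of
unique sums. This strengthens relative cancellativity to a property inherited by products. -/
structure IsRigid (A : Finset M) : Prop where
  zero_mem : 0 ∈ A
  sumConnected : ∀ X Y : Finset M, 0 ∈ X → 0 ∈ Y → X + Y = A → SumConnected X Y

theorem IsRigid.eq_of_add_eq (hA : IsRigid A) (hX : 0 ∈ X) (hY : 0 ∈ Y) (hZ : 0 ∈ Z)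
    (hXY : X + Y = A) (hXZ : X + Z = A) : Y = Z := by
  have subset_of_add_eq : ∀ Y Z : Finset M, 0 ∈ Y → X + Y = A → X + Z = A → Z ⊆ Y := by
    intro Y Z hY hXY hXZ z hz
    have hunion : X + (Y ∪ Z) = A := by rw [Finset.add_union, hXY, hXZ, Finset.union_self]
    refine (hA.sumConnected X (Y ∪ Z) hX (Finset.mem_union_left _ hY) hunion (fun _ => True)
      (· ∈ Y) (fun x hx y hy hxy => (iff_true_left trivial).2 ?_) trivial).2 z
        (Finset.mem_union_right _ hz)
    obtain ⟨x', hx', y', hy', h⟩ :=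
      Finset.mem_add.1 (hXY ▸ hunion ▸ Finset.add_mem_add hx hy : x + y ∈ X + Y)
    exact (hxy hx' (Finset.mem_union_left _ hy') h).2 ▸ hy'
  exact (subset_of_add_eq Z Y hZ hXZ hXY).antisymm (subset_of_add_eq Y Z hY hXY hXZ)

theorem IsRigid.left_of_add [IsCancelAdd M] (hX : 0 ∈ X) (hZ : 0 ∈ Z) (h : IsRigid (X + Z)) :
    IsRigid X := by
  refine ⟨hX, ?_⟩
  rintro X₁ X₂ h₁ h₂ rfl P Q hPQ hP
  have hX₂Z : X₂ ⊆ X₂ + Z := Finset.subset_add_left _ hZ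
  have edge {x y z : M} (hx : x ∈ X₁) (hy : y ∈ X₂) (hz : z ∈ Z)
      (hu : UniqueAdd X₁ (X₂ + Z) x (y + z)) : P x ↔ Q y := by
    refine hPQ x hx y hy fun a b ha hb hab => ?_
    obtain ⟨rfl, hbz⟩ := hu ha (Finset.add_mem_add hb hz) (by rw [← add_assoc, hab, add_assoc])
    exact ⟨rfl, add_right_cancel hbz⟩
  have spread := h.sumConnected X₁ (X₂ + Z) h₁ (hX₂Z h₂) (add_assoc _ _ _).symm P
    (fun w => ∀ y ∈ X₂, ∀ z ∈ Z, y + z = w → Q y) ?_ hP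
  · exact ⟨spread.1, fun y hy => spread.2 y (hX₂Z hy) y hy 0 hZ (add_zero y)⟩
  · intro x hx w hw hu
    obtain ⟨y, hy, z, hz, rfl⟩ := Finset.mem_add.1 hw
    exact ⟨fun hp y' hy' z' hz' e => (edge hx hy' hz' (e ▸ hu)).1 hp,
      fun hq => (edge hx hy hz hu).2 (hq y hy z hz rfl)⟩

theorem IsRigid.right_of_add [IsCancelAdd M] (hX : 0 ∈ X) (hZ : 0 ∈ Z) (h : IsRigid (X + Z)) :
    IsRigid Z :=
  IsRigid.left_of_add hZ hX (add_comm X Z ▸ h)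

theorem isRigid_iff_forall_powerset : IsRigid A ↔ 0 ∈ A ∧ ∀ X ∈ A.powerset, 0 ∈ X →
    ∀ Y ∈ Finset.powerset {y ∈ A | ∀ x ∈ X, x + y ∈ A}, 0 ∈ Y → X + Y = A →
      ∀ S ∈ X.powerset, ∀ R ∈ Y.powerset,
        (∀ x ∈ X, ∀ y ∈ Y, (∀ a ∈ X, ∀ b ∈ Y, a + b = x + y → a = x ∧ b = y) →
          (x ∈ S ↔ y ∈ R)) → 0 ∈ S → X ⊆ S ∧ Y ⊆ R := by
  classical
  refine ⟨fun h => ⟨h.zero_mem, fun X _ hX Y _ hY e S _ R _ hSR => ?_⟩, fun ⟨h0, h⟩ => ⟨h0, ?_⟩⟩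
  · exact h.sumConnected X Y hX hY e (· ∈ S) (· ∈ R) fun x hx y hy hu =>
      hSR x hx y hy fun a ha b hb => hu ha hb
  · rintro X Y hX hY rfl P Q hPQ hP
    have hY' : Y ⊆ {y ∈ X + Y | ∀ x ∈ X, x + y ∈ X + Y} := fun y hy =>
      Finset.mem_filter.2 ⟨Finset.subset_add_right _ hX hy, fun x hx => Finset.add_mem_add hx hy⟩
    have hfilter := h X (Finset.mem_powerset.2 (Finset.subset_add_left _ hY)) hX Y
      (Finset.mem_powerset.2 hY') hY rfl (X.filter P) (Finset.mem_powerset.2 (X.filter_subset P))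
      (Y.filter Q) (Finset.mem_powerset.2 (Y.filter_subset Q)) ?_
      (Finset.mem_filter.2 ⟨hX, hP⟩)
    · exact ⟨fun x hx => (Finset.mem_filter.1 (hfilter.1 hx)).2,
        fun y hy => (Finset.mem_filter.1 (hfilter.2 hy)).2⟩
    · intro x hx y hy hu
      simpa only [Finset.mem_filter, hx, hy, true_and] using
        hPQ x hx y hy fun a b ha hb => hu a ha b hb

instance : DecidablePred (IsRigid : Finset M → Prop) :=
  fun _ => decidable_of_iff' _ isRigid_iff_forall_powerset

end Rigid

section Fiber

variable {M N : Type*} {S X Y : Finset (M × N)} {A : Finset M} {B : Finset N} {s u : M} {x y : N}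

/-- The fiber of `S ⊆ M × N` above `s`, regarded as a subset of `N`. -/
noncomputable def fiber (S : Finset (M × N)) (s : M) : Finset N :=
  S.preimage (Prod.mk s) (Prod.mk_right_injective s).injOn

theorem mem_fiber : x ∈ fiber S s ↔ (s, x) ∈ S :=
  Finset.mem_preimage

theorem fiber_product (hs : s ∈ A) : fiber (A ×ˢ B) s = B := by
  ext b
  rw [mem_fiber, Finset.mem_product, and_iff_right hs]

variable [AddCommMonoid M] [AddCommMonoid N] [DecidableEq M]

theorem zero_mem_image_fst (h : 0 ∈ X) : 0 ∈ X.image Prod.fst :=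
  Finset.mem_image_of_mem Prod.fst h

theorem uniqueAdd_of_fiber (hsu : UniqueAdd (X.image Prod.fst) (Y.image Prod.fst) s u)
    (hxy : UniqueAdd (fiber X s) (fiber Y u) x y) : UniqueAdd X Y (s, x) (u, y) := by
  rintro ⟨a, a'⟩ ⟨b, b'⟩ ha hb hab
  obtain ⟨hfst, hsnd⟩ := Prod.ext_iff.1 hab
  obtain ⟨rfl, rfl⟩ := hsu (Finset.mem_image_of_mem _ ha) (Finset.mem_image_of_mem _ hb) hfst
  obtain ⟨rfl, rfl⟩ := hxy (mem_fiber.2 ha) (mem_fiber.2 hb) hsnd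
  exact ⟨rfl, rfl⟩

theorem SumConnected.of_fiber [Subsingleton (AddUnits M)] [Subsingleton (AddUnits N)]
    (hX : 0 ∈ X) (hY : 0 ∈ Y) (h : SumConnected (X.image Prod.fst) (Y.image Prod.fst))
    (hfiber : ∀ s ∈ X.image Prod.fst, ∀ u ∈ Y.image Prod.fst,
      UniqueAdd (X.image Prod.fst) (Y.image Prod.fst) s u →
        (0 ∈ fiber X s ∧ 0 ∈ fiber Y u) ∧ SumConnected (fiber X s) (fiber Y u)) :
    SumConnected X Y := by
  intro P Q hPQ hP
  have edge {s u : M} (hsu : UniqueAdd (X.image Prod.fst) (Y.image Prod.fst) s u) :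
      ∀ x ∈ fiber X s, ∀ y ∈ fiber Y u, UniqueAdd (fiber X s) (fiber Y u) x y →
        (P (s, x) ↔ Q (u, y)) := fun x hx y hy hxy =>
    hPQ _ (mem_fiber.1 hx) _ (mem_fiber.1 hy) (uniqueAdd_of_fiber hsu hxy)
  have spread := h (fun s => ∀ x ∈ fiber X s, P (s, x))
    (fun u => ∀ y ∈ fiber Y u, Q (u, y)) ?_ ?_
  · exact ⟨fun p hp => spread.1 p.1 (Finset.mem_image_of_mem _ hp) p.2 (mem_fiber.2 hp),
      fun p hp => spread.2 p.1 (Finset.mem_image_of_mem _ hp) p.2 (mem_fiber.2 hp)⟩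
  · intro s hs u hu hsu
    obtain ⟨⟨hx, hy⟩, hconn⟩ := hfiber s hs u hu hsu
    have spread_fiber := hconn (fun x => P (s, x)) (fun y => Q (u, y)) (edge hsu)
    have edge_zero := edge hsu 0 hx 0 hy uniqueAdd_zero_zero
    exact ⟨fun hs => (spread_fiber (hs 0 hx)).2,
      fun hu => (spread_fiber (edge_zero.2 (hu 0 hy))).1⟩
  · have hconn := (hfiber 0 (zero_mem_image_fst hX) 0 (zero_mem_image_fst hY)
      uniqueAdd_zero_zero).2
    exact (hconn (fun x => P (0, x)) (fun y => Q (0, y)) (edge uniqueAdd_zero_zero) hP).1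

variable [DecidableEq N]

theorem image_fst_add : (X + Y).image Prod.fst = X.image Prod.fst + Y.image Prod.fst :=
  Finset.image_add (AddMonoidHom.fst M N)

theorem image_snd_add : (X + Y).image Prod.snd = X.image Prod.snd + Y.image Prod.snd :=
  Finset.image_add (AddMonoidHom.snd M N)

theorem fiber_add_fiber (h : UniqueAdd (X.image Prod.fst) (Y.image Prod.fst) s u) :
    fiber X s + fiber Y u = fiber (X + Y) (s + u) := by
  ext z
  simp only [Finset.mem_add, mem_fiber]
  constructor
  · rintro ⟨x, hx, y, hy, rfl⟩
    exact ⟨_, hx, _, hy, rfl⟩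
  · rintro ⟨⟨a, x⟩, hx, ⟨b, y⟩, hy, hxy⟩
    obtain ⟨hfst, rfl⟩ := Prod.ext_iff.1 hxy
    obtain ⟨rfl, rfl⟩ := h (Finset.mem_image_of_mem _ hx) (Finset.mem_image_of_mem _ hy) hfst
    exact ⟨x, hx, y, hy, rfl⟩

variable [Subsingleton (AddUnits M)] [Subsingleton (AddUnits N)]

theorem IsRigid.of_fiber (hbase : IsRigid (S.image Prod.fst))
    (hfiber : ∀ t ∈ S.image Prod.fst, IsRigid (fiber S t)) : IsRigid S := by
  refine ⟨mem_fiber.1 (hfiber 0 hbase.zero_mem).zero_mem, ?_⟩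
  rintro X Y hX hY rfl
  rw [image_fst_add] at hbase hfiber
  refine .of_fiber hX hY (hbase.sumConnected _ _ (zero_mem_image_fst hX) (zero_mem_image_fst hY)
    rfl) fun s hs u hu hsu => ?_
  have hrigid := hfiber _ (Finset.add_mem_add hs hu)
  rw [← fiber_add_fiber hsu] at hrigid
  have hzero := zero_mem_add_iff.1 hrigid.zero_mem
  exact ⟨hzero, hrigid.sumConnected _ _ hzero.1 hzero.2 rfl⟩

theorem IsRigid.add_of_fiber
    (hbase : IsRigid (X.image Prod.fst + Y.image Prod.fst))
    (hunique : ∀ s ∈ X.image Prod.fst, ∀ u ∈ Y.image Prod.fst,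
      UniqueAdd (X.image Prod.fst) (Y.image Prod.fst) s u)
    (hfiber : ∀ s ∈ X.image Prod.fst, ∀ u ∈ Y.image Prod.fst, IsRigid (fiber X s + fiber Y u)) :
    IsRigid (X + Y) := by
  rw [← image_fst_add] at hbase
  refine .of_fiber hbase fun t ht => ?_
  rw [image_fst_add] at ht
  obtain ⟨s, hs, u, hu, rfl⟩ := Finset.mem_add.1 ht
  exact fiber_add_fiber (hunique s hs u hu) ▸ hfiber s hs u hu

theorem IsRigid.product (hA : IsRigid A) (hB : IsRigid B) :
    IsRigid (A ×ˢ B) := by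
  have hbase : (A ×ˢ B).image Prod.fst = A := Finset.product_image_fst ⟨0, hB.zero_mem⟩
  refine .of_fiber (hbase.symm ▸ hA) fun t ht => ?_
  rwa [fiber_product (hbase ▸ ht)]

theorem IsRigid.eq_product_of_add_eq_product (hA : IsRigid A) (hB : IsRigid B) (hX : 0 ∈ X)
    (hY : 0 ∈ Y) (h : X + Y = A ×ˢ B) : X = X.image Prod.fst ×ˢ X.image Prod.snd := by
  have hbase : X.image Prod.fst + Y.image Prod.fst = A := by
    rw [← image_fst_add, h, Finset.product_image_fst ⟨0, hB.zero_mem⟩]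
  have hX₀ := zero_mem_image_fst hX
  have hY₀ := zero_mem_image_fst hY
  have fiber_add_eq {s u : M} (hs : s ∈ X.image Prod.fst) (hu : u ∈ Y.image Prod.fst)
      (hsu : UniqueAdd (X.image Prod.fst) (Y.image Prod.fst) s u) :
      fiber X s + fiber Y u = B := by
    rw [fiber_add_fiber hsu, h, fiber_product (hbase ▸ Finset.add_mem_add hs hu)]
  have fiber_zero := fiber_add_eq hX₀ hY₀ uniqueAdd_zero_zero
  obtain ⟨hX₀', hY₀'⟩ := zero_mem_add_iff.1 (fiber_zero ▸ hB.zero_mem)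
  have fiber_eq := (hA.sumConnected _ _ hX₀ hY₀ hbase (fun s => fiber X s = fiber X 0)
    (fun u => fiber Y u = fiber Y 0) (fun s hs u hu hsu => ?_) rfl).1
  · ext ⟨s, x⟩
    refine ⟨fun h => Finset.mem_product.2 ⟨Finset.mem_image_of_mem _ h,
      Finset.mem_image_of_mem _ h⟩, fun h => ?_⟩
    obtain ⟨hs, hx⟩ := Finset.mem_product.1 h
    obtain ⟨⟨t, x⟩, htx, rfl⟩ := Finset.mem_image.1 hx
    rw [← mem_fiber, fiber_eq s hs, ← fiber_eq t (Finset.mem_image_of_mem _ htx)]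
    exact mem_fiber.2 htx
  · have fiber_su := fiber_add_eq hs hu hsu
    obtain ⟨hs₀, hu₀⟩ := zero_mem_add_iff.1 (fiber_su ▸ hB.zero_mem)
    constructor <;> intro heq
    · exact hB.eq_of_add_eq hX₀' hu₀ hY₀' (heq ▸ fiber_su) fiber_zero
    · rw [add_comm] at fiber_su fiber_zero
      exact hB.eq_of_add_eq hY₀' hs₀ hX₀' (heq ▸ fiber_su) fiber_zero

end Fiber

section InjOnSums

variable {M N : Type*} [AddCommMonoid M] [AddCommMonoid N]
  {f : M →+ N} {S T : Finset M} {X Y : Finset N}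

theorem zero_mem_image [DecidableEq N] (f : M →+ N) (h0 : 0 ∈ S) : 0 ∈ S.image f :=
  Finset.mem_image.2 ⟨0, h0, map_zero f⟩

variable [DecidableEq M]

/-- `f` is injective on `S + S`. On a set `S` containing `0` this makes `f` an isomorphism onto its
image for sumset decompositions; it is Freiman's notion of an isomorphism of order two. -/
def InjOnSums (f : M →+ N) (S : Finset M) : Prop :=
  Set.InjOn f (S + S : Finset M)

theorem InjOnSums.mono (hST : S ⊆ T) (hf : InjOnSums f T) : InjOnSums f S :=
  Set.InjOn.mono (Finset.coe_subset.2 (Finset.add_subset_add hST hST)) hf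

theorem InjOnSums.injOn (h0 : 0 ∈ S) (hf : InjOnSums f S) : Set.InjOn f S :=
  Set.InjOn.mono (Finset.coe_subset.2 (Finset.subset_add_left S h0)) hf

variable [DecidableEq N]

theorem InjOnSums.image_eq_singleton_zero_iff (h0 : 0 ∈ S) (hf : InjOnSums f S) :
    S.image f = {0} ↔ S = {0} := by
  rw [← Finset.image_eq_image_iff_of_injOn (hf.injOn h0) subset_rfl
    (Finset.singleton_subset_iff.2 h0), Finset.image_singleton, map_zero]

theorem InjOnSums.exists_lift (h0 : 0 ∈ S) (hf : InjOnSums f S) (hX : 0 ∈ X)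
    (hXS : X ⊆ S.image f) : ∃ X' ⊆ S, 0 ∈ X' ∧ X'.image f = X := by
  obtain ⟨X', hX'S, rfl⟩ := Finset.subset_image_iff.1 hXS
  obtain ⟨x, hx, hfx⟩ := Finset.mem_image.1 hX
  obtain rfl : x = 0 := hf.injOn h0 (hX'S hx) h0 (hfx.trans (map_zero f).symm)
  exact ⟨X', hX'S, hx, rfl⟩

theorem InjOnSums.exists_lift_of_add_eq_image (h0 : 0 ∈ S) (hf : InjOnSums f S) (hX : 0 ∈ X)
    (hY : 0 ∈ Y) (h : X + Y = S.image f) :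
    ∃ X' Y', 0 ∈ X' ∧ 0 ∈ Y' ∧ X' + Y' = S ∧ X'.image f = X ∧ Y'.image f = Y := by
  obtain ⟨X', hX'S, hX', rfl⟩ := hf.exists_lift h0 hX (h ▸ Finset.subset_add_left X hY)
  obtain ⟨Y', hY'S, hY', rfl⟩ := hf.exists_lift h0 hY (h ▸ Finset.subset_add_right Y hX)
  rw [← Finset.image_add, Finset.image_eq_image_iff_of_injOn hf
    (Finset.add_subset_add hX'S hY'S) (Finset.subset_add_left S h0)] at h
  exact ⟨X', Y', hX', hY', h, rfl, rfl⟩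

theorem IsRigid.image (hS : IsRigid S) (hf : InjOnSums f S) : IsRigid (S.image f) := by
  refine ⟨zero_mem_image f hS.zero_mem, fun _ _ h₀ h₀' h P Q hPQ hP => ?_⟩
  obtain ⟨X, Y, hX, hY, rfl, rfl, rfl⟩ := hf.exists_lift_of_add_eq_image hS.zero_mem h₀ h₀' h
  have hXS : X ⊆ X + Y := Finset.subset_add_left X hY
  have hYS : Y ⊆ X + Y := Finset.subset_add_right Y hX
  have uniqueAdd_image {x y : M} (hx : x ∈ X) (hy : y ∈ Y) (hu : UniqueAdd X Y x y) :
      UniqueAdd (X.image f) (Y.image f) (f x) (f y) := by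
    intro _ _ hfa hfb hab
    obtain ⟨a, ha, rfl⟩ := Finset.mem_image.1 hfa
    obtain ⟨b, hb, rfl⟩ := Finset.mem_image.1 hfb
    rw [← map_add, ← map_add] at hab
    obtain ⟨rfl, rfl⟩ := hu ha hb (hf (Finset.add_mem_add (hXS ha) (hYS hb))
      (Finset.add_mem_add (hXS hx) (hYS hy)) hab)
    exact ⟨rfl, rfl⟩
  simpa only [Finset.forall_mem_image, Function.comp_apply] using
    hS.sumConnected X Y hX hY rfl (P ∘ f) (Q ∘ f)
      (fun x hx y hy hu => hPQ (f x) (Finset.mem_image_of_mem f hx) (f y)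
        (Finset.mem_image_of_mem f hy) (uniqueAdd_image hx hy hu))
      ((congrArg P (map_zero f)).mpr hP)

theorem exists_injOnSums (S : Finset (ℕ × ℕ)) : ∃ f : ℕ × ℕ →+ ℕ, InjOnSums f S := by
  obtain ⟨n, hn⟩ := ((S + S).image Prod.fst).exists_nat_subset_range
  refine ⟨(AddMonoidHom.id ℕ).coprod (AddMonoidHom.mulLeft n), fun p hp q hq h => ?_⟩
  have hpn : p.1 < n := Finset.mem_range.1 (hn (Finset.mem_image_of_mem _ hp))
  have hqn : q.1 < n := Finset.mem_range.1 (hn (Finset.mem_image_of_mem _ hq))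
  replace h : p.1 + n * p.2 = q.1 + n * q.2 := h
  have hfst : p.1 = q.1 := by
    simpa only [Nat.add_mul_mod_self_left, Nat.mod_eq_of_lt, hpn, hqn] using congrArg (· % n) h
  have hsnd : n * p.2 = n * q.2 := Nat.add_left_cancel (hfst ▸ h)
  exact Prod.ext hfst (Nat.eq_of_mul_eq_mul_left (Nat.zero_lt_of_lt hpn) hsnd)

end InjOnSums

section CodedProd

variable {M N P : Type*} [AddCommMonoid M] [AddCommMonoid N] [AddCommMonoid P]
  {f : M × N →+ P} {A C : Finset M} {B D : Finset N} {X Y : Finset P}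

theorem InjOnSums.comp_inl [DecidableEq M] [DecidableEq N] (hB : 0 ∈ B)
    (hf : InjOnSums f (A ×ˢ B)) : InjOnSums (f.comp (.inl M N)) A := by
  rw [InjOnSums, Finset.product_add_product_comm] at hf
  have mem {a : M} (ha : a ∈ A + A) : (a, 0) ∈ (A + A) ×ˢ (B + B) :=
    Finset.mk_mem_product ha (Finset.subset_add_left B hB hB)
  exact fun a ha b hb h => congrArg Prod.fst (hf (mem ha) (mem hb) h)

theorem InjOnSums.comp_inr [DecidableEq M] [DecidableEq N] (hA : 0 ∈ A)
    (hf : InjOnSums f (A ×ˢ B)) : InjOnSums (f.comp (.inr M N)) B := by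
  rw [InjOnSums, Finset.product_add_product_comm] at hf
  have mem {b : N} (hb : b ∈ B + B) : (0, b) ∈ (A + A) ×ˢ (B + B) :=
    Finset.mk_mem_product (Finset.subset_add_left A hA hA) hb
  exact fun a ha b hb h => congrArg Prod.snd (hf (mem ha) (mem hb) h)

variable [DecidableEq P]

/-- The product of `A` and `B` transported along an additive homomorphism `f`, which will be
injective on the relevant sums. It lets the product of two subsets of `ℕ` be formed inside `ℕ`. -/
def codedProd (f : M × N →+ P) (A : Finset M) (B : Finset N) : Finset P :=
  (A ×ˢ B).image f

variable (f) in
theorem zero_mem_codedProd (hA : 0 ∈ A) (hB : 0 ∈ B) : 0 ∈ codedProd f A B :=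
  Finset.mem_image.2 ⟨0, Finset.mk_mem_product hA hB, map_zero f⟩

theorem codedProd_add_codedProd [DecidableEq M] [DecidableEq N] :
    codedProd f A B + codedProd f C D = codedProd f (A + C) (B + D) := by
  rw [codedProd, codedProd, codedProd, ← Finset.product_add_product_comm, Finset.image_add]

theorem codedProd_eq_add : codedProd f A B = codedProd f A {0} + codedProd f {0} B := by
  classical
  rw [codedProd_add_codedProd, Finset.singleton_zero, Finset.singleton_zero, add_zero, zero_add]

theorem codedProd_zero_right : codedProd f A {0} = A.image (f.comp (.inl M N)) := by
  classical
  simp only [codedProd, Finset.product_singleton, Finset.map_eq_image, Finset.image_image]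
  rfl

theorem codedProd_zero_left : codedProd f {0} B = B.image (f.comp (.inr M N)) := by
  classical
  simp only [codedProd, Finset.singleton_product, Finset.map_eq_image, Finset.image_image]
  rfl

variable [DecidableEq M] [DecidableEq N]

theorem codedProd_eq_singleton_zero_iff (hA : 0 ∈ A) (hB : 0 ∈ B) (hf : InjOnSums f (A ×ˢ B)) :
    codedProd f A B = {0} ↔ A = {0} ∧ B = {0} := by
  rw [codedProd, hf.image_eq_singleton_zero_iff (Finset.mk_mem_product hA hB)]
  refine ⟨fun h => ?_, fun ⟨hA, hB⟩ => hA ▸ hB ▸ Finset.singleton_product_singleton⟩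
  have hfst := congrArg (Finset.image Prod.fst) h
  have hsnd := congrArg (Finset.image Prod.snd) h
  rw [Finset.product_image_fst ⟨0, hB⟩, Finset.image_singleton] at hfst
  rw [Finset.product_image_snd ⟨0, hA⟩, Finset.image_singleton] at hsnd
  exact ⟨hfst, hsnd⟩

variable [Subsingleton (AddUnits M)] [Subsingleton (AddUnits N)]

theorem IsRigid.codedProd (hA : IsRigid A) (hB : IsRigid B) (hf : InjOnSums f (A ×ˢ B)) :
    IsRigid (codedProd f A B) :=
  (hA.product hB).image hf

theorem exists_codedProd_of_add_eq_codedProd (hA : IsRigid A) (hB : IsRigid B)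
    (hf : InjOnSums f (A ×ˢ B)) (hX : 0 ∈ X) (hY : 0 ∈ Y) (h : X + Y = codedProd f A B) :
    ∃ A₁ A₂ B₁ B₂, A₁ + A₂ = A ∧ B₁ + B₂ = B ∧ X = codedProd f A₁ B₁ ∧ Y = codedProd f A₂ B₂ := by
  obtain ⟨X', Y', hX', hY', hXY, rfl, rfl⟩ :=
    hf.exists_lift_of_add_eq_image (Finset.mk_mem_product hA.zero_mem hB.zero_mem) hX hY h
  refine ⟨X'.image Prod.fst, Y'.image Prod.fst, X'.image Prod.snd, Y'.image Prod.snd, ?_, ?_,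
    congrArg _ (hA.eq_product_of_add_eq_product hB hX' hY' hXY),
    congrArg _ (hA.eq_product_of_add_eq_product hB hY' hX' (add_comm X' Y' ▸ hXY))⟩
  · rw [← image_fst_add, hXY, Finset.product_image_fst ⟨0, hB.zero_mem⟩]
  · rw [← image_snd_add, hXY, Finset.product_image_snd ⟨0, hA.zero_mem⟩]

end CodedProd

section Atoms

variable {A B C D : Finset ℕ} {f : ℕ × ℕ →+ ℕ}

theorem isAtomP_iff_forall_powerset : IsAtomP A ↔ 0 ∈ A ∧ A ≠ {0} ∧
    ∀ X ∈ A.powerset, ∀ Y ∈ A.powerset, 0 ∈ X → 0 ∈ Y → A = X + Y → X = {0} ∨ Y = {0} := by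
  refine and_congr_right fun _ => and_congr_right fun _ => ⟨fun h X _ Y _ => h X Y, ?_⟩
  rintro h X Y hX hY rfl
  exact h X (Finset.mem_powerset.2 (Finset.subset_add_left X hY)) Y
    (Finset.mem_powerset.2 (Finset.subset_add_right Y hX)) hX hY rfl

instance : DecidablePred IsAtomP :=
  fun _ => decidable_of_iff' _ isAtomP_iff_forall_powerset

theorem IsAtomP.nontrivial (hA : IsAtomP A) : A.Nontrivial :=
  (Finset.nontrivial_iff_ne_singleton hA.1).2 hA.2.1

theorem relPrime_zero_left : RelPrime 0 B := by
  rintro T hT ⟨C, hC, hTC⟩ -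
  exact (Finset.Nonempty.subset_singleton_iff ⟨0, hT⟩).1
    ((Finset.subset_add_left T hC).trans_eq hTC.symm)

theorem IsAtomP.relPrime (hA : IsAtomP A) (hB : IsAtomP B) (hAB : A ≠ B) : RelPrime A B := by
  rintro T hT ⟨C, hC, rfl⟩ ⟨D, hD, rfl⟩
  by_contra hT0
  obtain rfl := (hA.2.2 T C hT hC rfl).resolve_left hT0
  obtain rfl := (hB.2.2 T D hT hD rfl).resolve_left hT0
  exact hAB rfl

theorem isAtomP_image_iff {M : Type*} [AddCommMonoid M] [DecidableEq M] {g : M →+ ℕ}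
    {S : Finset M} (h0 : 0 ∈ S) (hg : InjOnSums g S) : IsAtomP (S.image g) ↔
      S ≠ {0} ∧ ∀ X Y : Finset M, 0 ∈ X → 0 ∈ Y → S = X + Y → X = {0} ∨ Y = {0} := by
  rw [IsAtomP, and_iff_right (zero_mem_image g h0), Ne, hg.image_eq_singleton_zero_iff h0]
  refine and_congr_right fun _ => ⟨?_, fun h X Y hX hY hXY => ?_⟩
  · rintro h X Y hX hY rfl
    refine (h _ _ (zero_mem_image g hX) (zero_mem_image g hY) (Finset.image_add g)).imp ?_ ?_
    · exact ((hg.mono (Finset.subset_add_left X hY)).image_eq_singleton_zero_iff hX).1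
    · exact ((hg.mono (Finset.subset_add_right Y hX)).image_eq_singleton_zero_iff hY).1
  · obtain ⟨X', Y', hX', hY', rfl, rfl, rfl⟩ :=
      hg.exists_lift_of_add_eq_image h0 hX hY hXY.symm
    refine (h X' Y' hX' hY' rfl).imp ?_ ?_ <;> rintro rfl <;>
      rw [Finset.image_singleton, map_zero]

theorem IsAtomP.of_codedProd (h : IsAtomP (codedProd f A B)) (hA : 0 ∈ A) (hB : 0 ∈ B)
    (hf : InjOnSums f (A ×ˢ B)) : IsAtomP A ∧ B = {0} ∨ A = {0} ∧ IsAtomP B := by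
  obtain h₀ | h₀ := h.2.2 _ _ (zero_mem_codedProd f hA (Finset.mem_singleton_self 0))
    (zero_mem_codedProd f (Finset.mem_singleton_self 0) hB) codedProd_eq_add
  · rw [codedProd_zero_right, (hf.comp_inl hB).image_eq_singleton_zero_iff hA] at h₀
    subst h₀
    rw [codedProd_zero_left, isAtomP_image_iff hB (hf.comp_inr hA)] at h
    exact .inr ⟨rfl, hB, h⟩
  · rw [codedProd_zero_left, (hf.comp_inr hA).image_eq_singleton_zero_iff hB] at h₀
    subst h₀
    rw [codedProd_zero_right, isAtomP_image_iff hA (hf.comp_inl hB)] at h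
    exact .inl ⟨⟨hA, h⟩, rfl⟩

theorem RelPrime.codedProd {S : Finset (ℕ × ℕ)} (hAC : RelPrime A C) (hBD : RelPrime B D)
    (hAB₀ : 0 ∈ A ×ˢ B) (hCD₀ : 0 ∈ C ×ˢ D) (hAB : A ×ˢ B ⊆ S) (hCD : C ×ˢ D ⊆ S)
    (hf : InjOnSums f S) : RelPrime (codedProd f A B) (codedProd f C D) := by
  rintro T hT ⟨_, hfX, hTX⟩ ⟨_, hfY, hTY⟩
  obtain ⟨Z, X, hZ, hX, hZX, rfl, rfl⟩ :=
    (hf.mono hAB).exists_lift_of_add_eq_image hAB₀ hT hfX hTX.symm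
  obtain ⟨Z', Y, -, hY, hZY, hZZ', rfl⟩ :=
    (hf.mono hCD).exists_lift_of_add_eq_image hCD₀ hT hfY hTY.symm
  obtain rfl : Z = Z' := (Finset.image_eq_image_iff_of_injOn (hf.injOn (hAB hAB₀))
    ((Finset.subset_add_left Z hX).trans (hZX ▸ hAB))
    ((Finset.subset_add_left Z' hY).trans (hZY ▸ hCD))).1 hZZ'.symm
  obtain ⟨hA, hB⟩ := Finset.mem_product.1 hAB₀
  obtain ⟨hC, hD⟩ := Finset.mem_product.1 hCD₀
  have hfst : Z.image Prod.fst = {0} := hAC _ (zero_mem_image_fst hZ)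
    ⟨X.image Prod.fst, zero_mem_image_fst hX, by
      rw [← image_fst_add, hZX, Finset.product_image_fst ⟨0, hB⟩]⟩
    ⟨Y.image Prod.fst, zero_mem_image_fst hY, by
      rw [← image_fst_add, hZY, Finset.product_image_fst ⟨0, hD⟩]⟩
  have hsnd : Z.image Prod.snd = {0} := hBD _ (Finset.mem_image_of_mem Prod.snd hZ)
    ⟨X.image Prod.snd, Finset.mem_image_of_mem Prod.snd hX, by
      rw [← image_snd_add, hZX, Finset.product_image_snd ⟨0, hA⟩]⟩
    ⟨Y.image Prod.snd, Finset.mem_image_of_mem Prod.snd hY, by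
      rw [← image_snd_add, hZY, Finset.product_image_snd ⟨0, hC⟩]⟩
  have hZ₀ : Z ⊆ {0} := Finset.subset_product.trans_eq (by rw [hfst, hsnd]; rfl)
  rw [(Finset.Nonempty.subset_singleton_iff ⟨0, hZ⟩).1 hZ₀, Finset.image_singleton, map_zero]

end Atoms

section Lengths

variable {A B U V : Finset ℕ} {f : ℕ × ℕ →+ ℕ} {g : ℕ →+ ℕ} {n : ℕ}

theorem zero_mem_lengthSet_iff : 0 ∈ LengthSet A ↔ A = {0} := by
  rw [Finset.singleton_zero]
  simp [LengthSet, eq_comm]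

theorem one_mem_lengthSet_iff : 1 ∈ LengthSet A ↔ IsAtomP A := by
  simp [LengthSet, Multiset.card_eq_one]

theorem zero_mem_sum {M : Type*} [AddCommMonoid M] [DecidableEq M] {l : Multiset (Finset M)}
    (hl : ∀ U ∈ l, 0 ∈ U) : 0 ∈ l.sum :=
  Multiset.sum_induction (0 ∈ ·) l (fun _ _ hA hB => Finset.subset_add_left _ hB hA)
    (Finset.mem_singleton_self 0) hl

theorem subset_sum_of_mem {M : Type*} [AddCommMonoid M] [DecidableEq M] {l : Multiset (Finset M)}
    {U : Finset M} (hl : ∀ U ∈ l, 0 ∈ U) (hU : U ∈ l) : U ⊆ l.sum := by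
  obtain ⟨l, rfl⟩ := Multiset.exists_cons_of_mem hU
  rw [Multiset.sum_cons]
  exact Finset.subset_add_left U (zero_mem_sum fun V hV => hl V (Multiset.mem_cons_of_mem hV))

theorem lengthSet_add_subset : LengthSet A + LengthSet B ⊆ LengthSet (A + B) := by
  rintro _ ⟨_, ⟨l, rfl, hl, rfl⟩, _, ⟨k, rfl, hk, rfl⟩, rfl⟩
  exact ⟨l + k, Multiset.card_add l k, fun U hU => (Multiset.mem_add.1 hU).elim (hl U) (hk U),
    Multiset.sum_add l k⟩

theorem lengthSet_subset_lengthSet_image (hg : InjOnSums g A) :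
    LengthSet A ⊆ LengthSet (A.image g) := by
  rintro _ ⟨l, rfl, hl, rfl⟩
  refine ⟨l.map (Finset.image g), Multiset.card_map _ l, ?_,
    (map_multiset_sum (Finset.imageAddMonoidHom g) l).symm⟩
  intro V hV
  obtain ⟨U, hU, rfl⟩ := Multiset.mem_map.1 hV
  exact (isAtomP_image_iff (hl U hU).1
    (hg.mono (subset_sum_of_mem (fun V hV => (hl V hV).1) hU))).2 (hl U hU).2

theorem card_lt_card_add (hA : A.Nonempty) (hB : B.Nontrivial) : A.card < (A + B).card := by
  have hcard_add := cauchy_davenport_add_of_linearOrder_isCancelAdd hA hB.nonempty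
  have hB_card := Finset.one_lt_card_iff_nontrivial.2 hB
  omega

theorem lt_card_of_mem_lengthSet (hn : n ∈ LengthSet A) : n < A.card := by
  obtain ⟨l, rfl, hl, rfl⟩ := hn
  induction l using Multiset.induction with
  | empty => simp
  | cons U l ih =>
    have hl' : ∀ V ∈ l, IsAtomP V := fun V hV => hl V (Multiset.mem_cons_of_mem hV)
    rw [Multiset.card_cons, Multiset.sum_cons, add_comm U]
    exact Nat.lt_of_le_of_lt (ih hl') (card_lt_card_add ⟨0, zero_mem_sum fun V hV => (hl' V hV).1⟩
      (hl U (Multiset.mem_cons_self U l)).nontrivial)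

theorem lengthSet_singleton_zero : LengthSet {0} = {0} :=
  Set.Subset.antisymm (fun _ hn => Nat.lt_one_iff.1 (lt_card_of_mem_lengthSet hn))
    (Set.singleton_subset_iff.2 (zero_mem_lengthSet_iff.2 rfl))

theorem IsAtomP.lengthSet_eq (hA : IsAtomP A) : LengthSet A = {1} := by
  refine Set.eq_singleton_iff_unique_mem.2 ⟨one_mem_lengthSet_iff.2 hA, ?_⟩
  rintro _ ⟨l, rfl, hl, rfl⟩
  induction l using Multiset.induction with
  | empty => exact absurd rfl hA.2.1
  | cons U l =>
    have hl' : ∀ V ∈ l, IsAtomP V := fun V hV => hl V (Multiset.mem_cons_of_mem hV)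
    have hU := hl U (Multiset.mem_cons_self U l)
    have hsum : l.sum = {0} := (hA.2.2 U l.sum hU.1 (zero_mem_sum fun V hV => (hl' V hV).1)
      (Multiset.sum_cons U l)).resolve_left hU.2.1
    have hcard : l.card ∈ LengthSet {0} := ⟨l, rfl, hl', hsum⟩
    rw [lengthSet_singleton_zero, Set.mem_singleton_iff] at hcard
    rw [Multiset.card_cons, hcard]

theorem lengthSet_nonempty (hA : 0 ∈ A) : (LengthSet A).Nonempty := by
  induction hn : A.card using Nat.strong_induction_on generalizing A with | _ n ih =>
  by_cases hA₀ : A = {0}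
  · exact ⟨0, zero_mem_lengthSet_iff.2 hA₀⟩
  by_cases hatom : IsAtomP A
  · exact ⟨1, one_mem_lengthSet_iff.2 hatom⟩
  obtain ⟨X, Y, hX, hY, rfl, hX₀, hY₀⟩ : ∃ X Y : Finset ℕ, 0 ∈ X ∧ 0 ∈ Y ∧ A = X + Y ∧
      X ≠ {0} ∧ Y ≠ {0} := by
    simpa only [IsAtomP, hA, ne_eq, hA₀, not_false_eq_true, true_and, not_forall, not_or,
      exists_prop] using hatom
  rw [← Finset.nontrivial_iff_ne_singleton hX] at hX₀
  rw [← Finset.nontrivial_iff_ne_singleton hY] at hY₀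
  have hXn : X.card < n := hn ▸ card_lt_card_add ⟨0, hX⟩ hY₀
  have hYn : Y.card < n := hn ▸ add_comm X Y ▸ card_lt_card_add ⟨0, hY⟩ hX₀
  exact ((ih _ hXn hX rfl).add (ih _ hYn hY rfl)).mono lengthSet_add_subset

theorem exists_isGreatest_lengthSet (hA : 0 ∈ A) : ∃ n, IsGreatest (LengthSet A) n :=
  BddAbove.exists_isGreatest_of_nonempty
    ⟨A.card, fun _ hn => (lt_card_of_mem_lengthSet hn).le⟩ (lengthSet_nonempty hA)

theorem IsAtomP.isLeast_lengthSet_add (hU : IsAtomP U) (hV : IsAtomP V) :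
    IsLeast (LengthSet (U + V)) 2 := by
  refine ⟨lengthSet_add_subset (Set.add_mem_add (one_mem_lengthSet_iff.2 hU)
    (one_mem_lengthSet_iff.2 hV)), fun n hn => ?_⟩
  have hn₀ : n ≠ 0 := by
    rintro rfl
    have hcard := card_lt_card_add ⟨0, hU.1⟩ hV.nontrivial
    rw [zero_mem_lengthSet_iff.1 hn, Finset.card_singleton] at hcard
    exact absurd (Finset.one_lt_card_iff_nontrivial.2 hU.nontrivial) hcard.le.not_gt
  have hn₁ : n ≠ 1 := by
    rintro rfl
    exact ((one_mem_lengthSet_iff.1 hn).2.2 U V hU.1 hV.1 rfl).elim hU.2.1 hV.2.1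
  exact (Nat.two_le_iff n).2 ⟨hn₀, hn₁⟩

theorem lengthSet_add_subset_codedProd (hA : 0 ∈ A) (hB : 0 ∈ B) (hf : InjOnSums f (A ×ˢ B)) :
    LengthSet A + LengthSet B ⊆ LengthSet (codedProd f A B) := by
  rw [codedProd_eq_add, codedProd_zero_right, codedProd_zero_left]
  exact (Set.add_subset_add (lengthSet_subset_lengthSet_image (hf.comp_inl hB))
    (lengthSet_subset_lengthSet_image (hf.comp_inr hA))).trans lengthSet_add_subset

theorem lengthSet_codedProd (hA : IsRigid A) (hB : IsRigid B) (hf : InjOnSums f (A ×ˢ B)) :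
    LengthSet (codedProd f A B) = LengthSet A + LengthSet B := by
  refine Set.Subset.antisymm ?_ (lengthSet_add_subset_codedProd hA.zero_mem hB.zero_mem hf)
  rintro _ ⟨l, rfl, hl, hsum⟩
  induction l using Multiset.induction generalizing A B with
  | empty =>
    obtain ⟨hA₀, hB₀⟩ := (codedProd_eq_singleton_zero_iff hA.zero_mem hB.zero_mem hf).1 hsum.symm
    exact Set.add_mem_add (zero_mem_lengthSet_iff.2 hA₀) (zero_mem_lengthSet_iff.2 hB₀)
  | cons U l ih =>
    have hU := hl U (Multiset.mem_cons_self U l)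
    have hl' : ∀ V ∈ l, IsAtomP V := fun V hV => hl V (Multiset.mem_cons_of_mem hV)
    rw [Multiset.sum_cons] at hsum
    obtain ⟨A₁, A₂, B₁, B₂, rfl, rfl, rfl, hl_sum⟩ := exists_codedProd_of_add_eq_codedProd hA hB hf
      hU.1 (zero_mem_sum fun V hV => (hl' V hV).1) hsum
    obtain ⟨hA₁, hA₂⟩ := zero_mem_add_iff.1 hA.zero_mem
    obtain ⟨hB₁, hB₂⟩ := zero_mem_add_iff.1 hB.zero_mem
    have hsub₁ : A₁ ×ˢ B₁ ⊆ (A₁ + A₂) ×ˢ (B₁ + B₂) := Finset.product_subset_product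
      (Finset.subset_add_left A₁ hA₂) (Finset.subset_add_left B₁ hB₂)
    have hsub₂ : A₂ ×ˢ B₂ ⊆ (A₁ + A₂) ×ˢ (B₁ + B₂) := Finset.product_subset_product
      (Finset.subset_add_right A₂ hA₁) (Finset.subset_add_right B₂ hB₁)
    have hone : 1 ∈ LengthSet A₁ + LengthSet B₁ := by
      obtain ⟨hA₁, rfl⟩ | ⟨rfl, hB₁⟩ := hU.of_codedProd hA₁ hB₁ (hf.mono hsub₁)
      · exact Set.add_mem_add (one_mem_lengthSet_iff.2 hA₁) (zero_mem_lengthSet_iff.2 rfl)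
      · exact Set.add_mem_add (zero_mem_lengthSet_iff.2 rfl) (one_mem_lengthSet_iff.2 hB₁)
    have hcard := ih (hA.right_of_add hA₁ hA₂) (hB.right_of_add hB₁ hB₂) (hf.mono hsub₂)
      hl' hl_sum
    have hmem := Set.add_mem_add hone hcard
    rw [add_add_add_comm, add_comm 1] at hmem
    rw [Multiset.card_cons]
    exact Set.add_subset_add lengthSet_add_subset lengthSet_add_subset hmem

end Lengths

section ExtremalLengths

/-- The pairs `(min L(A), max L(A))` realized by rigid sets `A`. -/
def extremalLengths : AddSubmonoid (ℕ × ℕ) where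
  carrier := {p | ∃ A, IsRigid A ∧ IsLeast (LengthSet A) p.1 ∧ IsGreatest (LengthSet A) p.2}
  zero_mem' := by
    refine ⟨{0}, by decide, ?_⟩
    rw [lengthSet_singleton_zero]
    exact ⟨isLeast_singleton, isGreatest_singleton⟩
  add_mem' := by
    rintro p q ⟨A, hA, hA_least, hA_greatest⟩ ⟨B, hB, hB_least, hB_greatest⟩
    obtain ⟨f, hf⟩ := exists_injOnSums (A ×ˢ B)
    refine ⟨codedProd f A B, hA.codedProd hB hf, ?_⟩
    rw [lengthSet_codedProd hA hB hf]
    exact ⟨⟨Set.add_mem_add hA_least.1 hB_least.1,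
        add_mem_lowerBounds_add hA_least.2 hB_least.2⟩,
      ⟨Set.add_mem_add hA_greatest.1 hB_greatest.1,
        add_mem_upperBounds_add hA_greatest.2 hB_greatest.2⟩⟩

theorem isAtomP_pair {c : ℕ} (hc : c ≠ 0) : IsAtomP {0, c} := by
  have hcard : ({0, c} : Finset ℕ).card = 2 := Finset.card_pair hc.symm
  refine ⟨Finset.mem_insert_self 0 _, fun h => by simp [h] at hcard, fun X Y hX hY hXY => ?_⟩
  by_contra! hne
  rw [← Finset.nontrivial_iff_ne_singleton hX, ← Finset.nontrivial_iff_ne_singleton hY] at hne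
  have hX_card := Finset.one_lt_card_iff_nontrivial.2 hne.1
  have hXY_card := card_lt_card_add hne.1.nonempty hne.2
  rw [← hXY, hcard] at hXY_card
  exact absurd hX_card (Nat.lt_succ_iff.1 hXY_card).not_gt

theorem one_one_mem_extremalLengths : (1, 1) ∈ extremalLengths := by
  refine ⟨{0, 1}, by decide, ?_⟩
  rw [(isAtomP_pair one_ne_zero).lengthSet_eq]
  exact ⟨isLeast_singleton, isGreatest_singleton⟩

end ExtremalLengths

section TwoLevel

variable {M N : Type*} [Zero M] [DecidableEq M] [DecidableEq N] {c : M} {C D : Finset N}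

/-- The subset of `M × N` with fiber `C` above `0` and fiber `D` above `c`. -/
def twoLevel (c : M) (C D : Finset N) : Finset (M × N) :=
  {0} ×ˢ C ∪ {c} ×ˢ D

theorem zero_mem_twoLevel [Zero N] (hC : 0 ∈ C) : 0 ∈ twoLevel c C D :=
  Finset.mem_union_left _ (Finset.mk_mem_product (Finset.mem_singleton_self 0) hC)

theorem image_fst_twoLevel (hC : C.Nonempty) (hD : D.Nonempty) :
    (twoLevel c C D).image Prod.fst = {0, c} := by
  rw [twoLevel, Finset.image_union, Finset.product_image_fst hC, Finset.product_image_fst hD]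
  rfl

theorem fiber_twoLevel_zero (hc : c ≠ 0) : fiber (twoLevel c C D) 0 = C := by
  ext x
  simp [mem_fiber, twoLevel, hc]

theorem fiber_twoLevel (hc : c ≠ 0) : fiber (twoLevel c C D) c = D := by
  ext x
  simp [mem_fiber, twoLevel, hc.symm]

end TwoLevel

section TwoLevelAtom

variable {c : ℕ} {C D : Finset ℕ} {X Y : Finset (ℕ × ℕ)} {f : ℕ × ℕ →+ ℕ}

theorem eq_singleton_zero_of_twoLevel_eq_add (hc : c ≠ 0) (hD : 0 ∈ D) (hCD : RelPrime C D)
    (hX : 0 ∈ X) (hY : 0 ∈ Y) (h : twoLevel c C D = X + Y) (hfst : X.image Prod.fst = {0}) :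
    X = {0} := by
  have fiber_add (u : ℕ) : fiber X 0 + fiber Y u = fiber (twoLevel c C D) u := by
    rw [fiber_add_fiber, h, zero_add]
    intro a b ha _ hab
    rw [hfst, Finset.mem_singleton] at ha
    exact ⟨ha, Nat.add_left_cancel (ha ▸ hab)⟩
  have fiber_add_zero : fiber X 0 + fiber Y 0 = C := by rw [fiber_add, fiber_twoLevel_zero hc]
  have fiber_add_c : fiber X 0 + fiber Y c = D := by rw [fiber_add, fiber_twoLevel hc]
  have hfiber : fiber X 0 = {0} := hCD _ (mem_fiber.2 hX)
    ⟨fiber Y 0, mem_fiber.2 hY, fiber_add_zero.symm⟩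
    ⟨fiber Y c, (zero_mem_add_iff.1 (fiber_add_c ▸ hD)).2, fiber_add_c.symm⟩
  refine Finset.eq_singleton_iff_unique_mem.2 ⟨hX, fun ⟨a, x⟩ hax => ?_⟩
  obtain rfl : a = 0 := Finset.mem_singleton.1 (hfst ▸ Finset.mem_image_of_mem Prod.fst hax)
  exact Prod.ext rfl (Finset.mem_singleton.1 (hfiber ▸ mem_fiber.2 hax))

theorem isAtomP_image_twoLevel (hc : c ≠ 0) (hC : 0 ∈ C) (hD : 0 ∈ D) (hCD : RelPrime C D)
    (hf : InjOnSums f (twoLevel c C D)) : IsAtomP ((twoLevel c C D).image f) := by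
  have hbase : (twoLevel c C D).image Prod.fst = {0, c} := image_fst_twoLevel ⟨0, hC⟩ ⟨0, hD⟩
  have hatom := isAtomP_pair hc
  refine (isAtomP_image_iff (zero_mem_twoLevel hC) hf).2 ⟨fun h => ?_, fun X Y hX hY h => ?_⟩
  · rw [h, Finset.image_singleton] at hbase
    exact hatom.2.1 hbase.symm
  · rw [h, image_fst_add] at hbase
    refine (hatom.2.2 _ _ (zero_mem_image_fst hX) (zero_mem_image_fst hY) hbase.symm).imp ?_ ?_
    · exact eq_singleton_zero_of_twoLevel_eq_add hc hD hCD hX hY h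
    · exact eq_singleton_zero_of_twoLevel_eq_add hc hD hCD hY hX (h.trans (add_comm X Y))

end TwoLevelAtom

section Exchange

variable {n n' : ℕ} {C D C' D' : Fin 2 → Finset ℕ}

/-- The data of an exchange: `C 1` divides both `C 0 + D 0` and `C 0 + D 1`, hence it divides the
sum of two-level sets `twoLevel c (C 0) (C 1) + twoLevel d (D 0) (D 1)`, although the coprimality
conditions make both summands atoms. The parameter `n` is a length of `C 1`. -/
structure Exchange (n : ℕ) (C D : Fin 2 → Finset ℕ) : Prop where
  isRigid : ∀ i j, IsRigid (C i + D j)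
  dvd : ∀ j, ∃ R, C 1 + R = C 0 + D j
  relPrime_left : RelPrime (C 0) (C 1)
  relPrime_right : RelPrime (D 0) (D 1)
  mem_lengthSet : n ∈ LengthSet (C 1)

theorem exchange_zero : Exchange 0 0 0 where
  isRigid := by decide
  dvd _ := ⟨0, rfl⟩
  relPrime_left := relPrime_zero_left
  relPrime_right := relPrime_zero_left
  mem_lengthSet := zero_mem_lengthSet_iff.2 rfl

theorem exchange_one : Exchange 1 ![{0, 1, 4}, {0, 1}] ![{0, 3, 4}, {0, 4, 5}] where
  isRigid := by decide +kernel
  dvd := Fin.forall_fin_two.2 ⟨⟨{0, 3, 4, 7}, by decide⟩, ⟨{0, 4, 5, 8}, by decide⟩⟩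
  relPrime_left := IsAtomP.relPrime (by decide) (by decide) (by decide)
  relPrime_right := IsAtomP.relPrime (by decide) (by decide) (by decide)
  mem_lengthSet := one_mem_lengthSet_iff.2 (isAtomP_pair one_ne_zero)

theorem Exchange.zero_mem (h : Exchange n C D) (i : Fin 2) : 0 ∈ C i ∧ 0 ∈ D i :=
  zero_mem_add_iff.1 (h.isRigid i i).zero_mem

theorem Exchange.exists_codedProd (h : Exchange n C D) (h' : Exchange n' C' D') :
    ∃ f : ℕ × ℕ →+ ℕ, Exchange (n + n') (fun i => codedProd f (C i) (C' i))
      (fun j => codedProd f (D j) (D' j)) := by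
  let S := Finset.univ.sup fun i => C i ×ˢ C' i
  let T := Finset.univ.sup fun j => D j ×ˢ D' j
  have hS (i : Fin 2) : C i ×ˢ C' i ⊆ S :=
    Finset.le_sup (f := fun i => C i ×ˢ C' i) (Finset.mem_univ i)
  have hT (j : Fin 2) : D j ×ˢ D' j ⊆ T :=
    Finset.le_sup (f := fun j => D j ×ˢ D' j) (Finset.mem_univ j)
  have hC (i : Fin 2) : 0 ∈ C i ×ˢ C' i := Finset.mk_mem_product (h.zero_mem i).1 (h'.zero_mem i).1
  have hD (j : Fin 2) : 0 ∈ D j ×ˢ D' j := Finset.mk_mem_product (h.zero_mem j).2 (h'.zero_mem j).2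
  obtain ⟨f, hf⟩ := exists_injOnSums (S + T)
  have hfS : InjOnSums f S := hf.mono (Finset.subset_add_left S (hT 0 (hD 0)))
  have hfT : InjOnSums f T := hf.mono (Finset.subset_add_right T (hS 0 (hC 0)))
  refine ⟨f, fun i j => ?_, fun j => ?_, ?_, ?_, ?_⟩
  · rw [codedProd_add_codedProd]
    refine (h.isRigid i j).codedProd (h'.isRigid i j) (hf.mono ?_)
    rw [← Finset.product_add_product_comm]
    exact Finset.add_subset_add (hS i) (hT j)
  · obtain ⟨R, hR⟩ := h.dvd j
    obtain ⟨R', hR'⟩ := h'.dvd j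
    exact ⟨codedProd f R R', by rw [codedProd_add_codedProd, codedProd_add_codedProd, hR, hR']⟩
  · exact h.relPrime_left.codedProd h'.relPrime_left (hC 0) (hC 1) (hS 0) (hS 1) hfS
  · exact h.relPrime_right.codedProd h'.relPrime_right (hD 0) (hD 1) (hT 0) (hT 1) hfT
  · exact lengthSet_add_subset_codedProd (h.zero_mem 1).1 (h'.zero_mem 1).1 (hfS.mono (hS 1))
      (Set.add_mem_add h.mem_lengthSet h'.mem_lengthSet)

theorem exists_exchange (n : ℕ) : ∃ C D, Exchange n C D := by
  induction n with
  | zero => exact ⟨0, 0, exchange_zero⟩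
  | succ n ih =>
    obtain ⟨C, D, h⟩ := ih
    obtain ⟨f, hf⟩ := h.exists_codedProd exchange_one
    exact ⟨_, _, hf⟩

theorem Exchange.isRigid_twoLevel_add_twoLevel (h : Exchange n C D) :
    IsRigid (twoLevel 1 (C 0) (C 1) + twoLevel 3 (D 0) (D 1)) := by
  refine .add_of_fiber ?_ ?_ ?_ <;>
    rw [image_fst_twoLevel ⟨0, (h.zero_mem 0).1⟩ ⟨0, (h.zero_mem 1).1⟩,
      image_fst_twoLevel ⟨0, (h.zero_mem 0).2⟩ ⟨0, (h.zero_mem 1).2⟩]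
  · decide
  · simp only [UniqueAdd, Finset.mem_insert, Finset.mem_singleton]
    omega
  · simp only [Finset.forall_mem_insert, Finset.mem_singleton, forall_eq,
      fiber_twoLevel_zero one_ne_zero, fiber_twoLevel_zero three_ne_zero,
      fiber_twoLevel one_ne_zero, fiber_twoLevel three_ne_zero, h.isRigid, and_self]

theorem Exchange.exists_add_eq_twoLevel_add_twoLevel (h : Exchange n C D) :
    ∃ F, {0} ×ˢ C 1 + F = twoLevel 1 (C 0) (C 1) + twoLevel 3 (D 0) (D 1) := by
  obtain ⟨R, hR⟩ := h.dvd 0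
  obtain ⟨R', hR'⟩ := h.dvd 1
  refine ⟨{0} ×ˢ R ∪ {1} ×ˢ D 0 ∪ ({3} ×ˢ R' ∪ {4} ×ˢ D 1), ?_⟩
  simp only [twoLevel, Finset.union_add, Finset.add_union, Finset.product_add_product_comm,
    Finset.singleton_add_singleton, hR, hR', zero_add, add_zero, Nat.reduceAdd]

theorem Exchange.exists_mem_extremalLengths (h : Exchange n C D) :
    ∃ m ≥ n, (2, m) ∈ extremalLengths := by
  have hrigid := h.isRigid_twoLevel_add_twoLevel
  obtain ⟨F, hF⟩ := h.exists_add_eq_twoLevel_add_twoLevel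
  set U := twoLevel 1 (C 0) (C 1)
  set V := twoLevel 3 (D 0) (D 1)
  obtain ⟨hU, hV⟩ := zero_mem_add_iff.1 hrigid.zero_mem
  obtain ⟨-, hF₀⟩ := zero_mem_add_iff.1 (hF ▸ hrigid.zero_mem)
  obtain ⟨f, hf⟩ := exists_injOnSums (U + V)
  have hU_atom : IsAtomP (U.image f) := isAtomP_image_twoLevel one_ne_zero (h.zero_mem 0).1
    (h.zero_mem 1).1 h.relPrime_left (hf.mono (Finset.subset_add_left U hV))
  have hV_atom : IsAtomP (V.image f) := isAtomP_image_twoLevel three_ne_zero (h.zero_mem 0).2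
    (h.zero_mem 1).2 h.relPrime_right (hf.mono (Finset.subset_add_right V hU))
  obtain ⟨m, hm⟩ := exists_isGreatest_lengthSet (zero_mem_image f hrigid.zero_mem)
  obtain ⟨k, hk⟩ := lengthSet_nonempty (zero_mem_image f hF₀)
  have hn : n ∈ LengthSet (codedProd f {0} (C 1)) := by
    have hfC : InjOnSums f ({0} ×ˢ C 1) := hf.mono (hF ▸ Finset.subset_add_left _ hF₀)
    rw [codedProd_zero_left]
    exact lengthSet_subset_lengthSet_image (hfC.comp_inr (Finset.mem_singleton_self 0))
      h.mem_lengthSet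
  have hnk : n + k ∈ LengthSet ((U + V).image f) := by
    rw [← hF, Finset.image_add]
    exact lengthSet_add_subset (Set.add_mem_add hn hk)
  refine ⟨m, (Nat.le_add_right n k).trans (hm.2 hnk), _, hrigid.image hf, ?_, hm⟩
  rw [Finset.image_add]
  exact hU_atom.isLeast_lengthSet_add hV_atom

end Exchange

theorem exists_mem_div_eq {E : AddSubmonoid (ℕ × ℕ)} {m : ℕ} (hone : (1, 1) ∈ E)
    (hunbounded : ∀ n, ∃ M ≥ n, (m, M) ∈ E) {q : ℚ} (hq : 1 ≤ q) :
    ∃ p ∈ E, (p.2 : ℚ) / p.1 = q := by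
  obtain ⟨a, b, hb, rfl⟩ : ∃ a b : ℕ, 0 < b ∧ (a / b : ℚ) = q := by
    lift q to ℚ≥0 using zero_le_one.trans hq
    exact ⟨q.num, q.den, q.den_pos, (NNRat.cast_def q).symm⟩
  rw [one_le_div (Nat.cast_pos.2 hb), Nat.cast_le] at hq
  obtain ⟨k, rfl⟩ := Nat.exists_eq_add_of_le hq
  obtain ⟨M, hM, hmM⟩ := hunbounded (m + (k * m + 1))
  obtain ⟨t, rfl⟩ := Nat.exists_eq_add_of_le (le_of_add_le_left hM)
  have ht : k * m < t := Nat.add_le_add_iff_left.1 hM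
  obtain ⟨j, hj⟩ := Nat.exists_eq_add_of_le (ht.le.trans (Nat.le_mul_of_pos_right t hb))
  refine ⟨(t * b, t * (b + k)), ?_, ?_⟩
  · have hfst : t * b = k * m + j * 1 := by rw [hj, mul_one]
    have hsnd : t * (b + k) = k * (m + t) + j * 1 := by rw [mul_add, hj]; ring
    have hcomb : (t * b, t * (b + k)) = k • (m, m + t) + j • (1, 1) := Prod.ext hfst hsnd
    exact hcomb ▸ add_mem (nsmul_mem hmM k) (nsmul_mem hone j)
  · rw [Nat.cast_mul, Nat.cast_mul, mul_div_mul_left _ _ (Nat.cast_ne_zero.2 ht.ne_bot)]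

theorem fully_elastic (q : ℚ) (hq : 1 ≤ q) :
    ∃ A : Finset ℕ, 0 ∈ A ∧ (LengthSet A).Nonempty ∧
      ∃ M m : ℕ, M ∈ LengthSet A ∧ m ∈ LengthSet A ∧
        (∀ k ∈ LengthSet A, m ≤ k ∧ k ≤ M) ∧ (M : ℚ) / (m : ℚ) = q := by
  have hunbounded (n : ℕ) : ∃ M ≥ n, (2, M) ∈ extremalLengths := by
    obtain ⟨C, D, h⟩ := exists_exchange n
    exact h.exists_mem_extremalLengths
  obtain ⟨⟨m, M⟩, ⟨A, hA, hm, hM⟩, hMm⟩ :=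
    exists_mem_div_eq one_one_mem_extremalLengths hunbounded hq
  exact ⟨A, hA.zero_mem, ⟨M, hM.1⟩, M, m, hM.1, hm.1, fun _ hk => ⟨hm.2 hk, hM.2 hk⟩, hMm⟩
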